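/- For every ℏ > 0, the closure in operator norm of the linear span of the set { T_{k,g,ℏ} : k ∈ ℤⁿ, g : ℝⁿ → ℂ a Schwartz function } equals the space of all compact operators on ℓ²(ℤⁿ). -/

import Mathlib

open scoped Real
open Filter MeasureTheory

noncomputable section

/-- `ℓ²(ℤⁿ)` with values in `ℂ`. -/
abbrev ℓ2 (n : ℕ) := lp (fun _ : Fin n → ℤ => ℂ) 2

/-!
Sampling a Schwartz function `g` on the lattice makes `T_{k,g,ℏ}` a translation with weights that
vanish at infinity, hence a norm limit of finite combinations of matrix units, hence compact.
Conversely the lattice is closed and discrete, so a bump function which is `1` at one lattice point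
and `0` at the others turns `T_{k,g,ℏ}` into a matrix unit, and matrix units span a dense subspace
of the compact operators.
-/

open Function InnerProductSpace Set Topology
open scoped ENNReal SchwartzMap

section RankOneDensity

theorem tendsto_clm_comp_of_isCompactOperator {α 𝕜 E F G : Type*} [NontriviallyNormedField 𝕜]
    [NormedAddCommGroup E] [NormedSpace 𝕜 E] [NormedAddCommGroup F] [NormedSpace 𝕜 F]
    [NormedAddCommGroup G] [NormedSpace 𝕜 G] {l : Filter α} {P : α → F →L[𝕜] G} {Q : F →L[𝕜] G}
    {T : E →L[𝕜] F} (hT : IsCompactOperator T) (hP : ∃ C, ∀ i, ‖P i‖ ≤ C)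
    (hPQ : ∀ y, Tendsto (fun i ↦ P i y) l (𝓝 (Q y))) :
    Tendsto (fun i ↦ P i ∘L T) l (𝓝 (Q ∘L T)) := by
  have equicontinuous : Equicontinuous ((↑) ∘ P : α → F → G) :=
    ((NormedSpace.equicontinuous_TFAE P).out 5 1).1 hP
  have uniform_on_compacts (K : Set F) (hK : IsCompact K) :
      TendstoUniformlyOn (fun i y ↦ P i y) Q l K := by
    refine UniformOnFun.tendsto_iff_tendstoUniformlyOn.1
      ((EquicontinuousOn.tendsto_uniformOnFun_iff_pi' (𝔖 := {K}) (by simpa using hK)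
        (fun K _ ↦ equicontinuous.equicontinuousOn K) l Q).2 ?_) K rfl
    exact tendsto_pi_nhds.2 fun y ↦ hPQ y
  refine (UniformConvergenceCLM.tendsto_iff_tendstoUniformlyOn _ _ _).2 fun B hB ↦ ?_
  obtain ⟨K, hK, hTBK⟩ :=
    IsCompactOperator.image_subset_compact_of_isVonNBounded (f := (T : E →ₗ[𝕜] F)) hT hB
  exact ((uniform_on_compacts K hK).comp T).mono (image_subset_iff.1 hTBK)

variable {𝕜 E F ι κ : Type*} [RCLike 𝕜]
  [NormedAddCommGroup E] [InnerProductSpace 𝕜 E] [NormedAddCommGroup F] [InnerProductSpace 𝕜 F]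

theorem isCompactOperator_rankOne (x : F) (y : E) : IsCompactOperator (rankOne 𝕜 x y) := by
  rw [rankOne_def']
  exact (isCompactOperator_of_locallyCompactSpace_dom (innerSL 𝕜 y)).clm_comp
    (ContinuousLinearMap.toSpanSingleton 𝕜 x)

variable (b : HilbertBasis ι 𝕜 F) (c : HilbertBasis κ 𝕜 E)

theorem rankOne_mem_of_isClosed {V : Submodule 𝕜 (E →L[𝕜] F)} (hV : IsClosed (V : Set (E →L[𝕜] F)))
    {x : F} (hx : ∀ j, rankOne 𝕜 x (c j) ∈ V) (y : E) : rankOne 𝕜 x y ∈ V := by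
  refine hV.mem_of_tendsto ((c.hasSum_repr y).mapL (rankOne 𝕜 x)) (Eventually.of_forall fun s ↦ ?_)
  simp only [map_smulₛₗ]
  exact V.sum_mem fun j _ ↦ V.smul_mem _ (hx j)

theorem hilbertBasis_proj_comp [CompleteSpace E] [CompleteSpace F] (s : Finset ι) (T : E →L[𝕜] F) :
    b.toUnconditionalSchauderBasis.proj s ∘L T =
      ∑ i ∈ s, rankOne 𝕜 (b i) (T.adjoint (b i)) := by
  ext x
  simp [GeneralSchauderBasis.proj_apply, ContinuousLinearMap.adjoint_inner_left]

theorem topologicalClosure_span_rankOne_eq_compactOperator [CompleteSpace E] [CompleteSpace F] :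
    (Submodule.span 𝕜 (range fun ij : ι × κ ↦ rankOne 𝕜 (b ij.1) (c ij.2))).topologicalClosure =
      compactOperator (RingHom.id 𝕜) E F := by
  set V := Submodule.span 𝕜 (range fun ij : ι × κ ↦ rankOne 𝕜 (b ij.1) (c ij.2))
  refine le_antisymm (Submodule.topologicalClosure_minimal _ ?_
    isClosed_setOfPred_isCompactOperator) fun T hT ↦ ?_
  · rw [Submodule.span_le, range_subset_iff]
    exact fun ij ↦ isCompactOperator_rankOne _ _
  have rankOne_mem (i : ι) (y : E) : rankOne 𝕜 (b i) y ∈ V.topologicalClosure :=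
    rankOne_mem_of_isClosed c V.isClosed_topologicalClosure
      (fun j ↦ V.le_topologicalClosure (Submodule.subset_span ⟨(i, j), rfl⟩)) y
  have proj_comp_tendsto :
      Tendsto (fun s ↦ b.toUnconditionalSchauderBasis.proj s ∘L T) atTop (𝓝 T) :=
    tendsto_clm_comp_of_isCompactOperator (Q := .id 𝕜 F) hT
      b.toUnconditionalSchauderBasis.exists_norm_proj_le
      b.toUnconditionalSchauderBasis.tendsto_proj
  refine V.isClosed_topologicalClosure.mem_of_tendsto proj_comp_tendsto
    (Eventually.of_forall fun s ↦ ?_)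
  rw [hilbertBasis_proj_comp]
  exact Submodule.sum_mem _ fun i _ ↦ rankOne_mem i _

end RankOneDensity

section WeightedTranslations

theorem lp_norm_le_mul_norm_of_injective {ι κ : Type*} {E : ι → Type*} {F : κ → Type*}
    [∀ i, NormedAddCommGroup (E i)] [∀ j, NormedAddCommGroup (F j)] {p : ℝ≥0∞} (hp : p ≠ 0)
    {σ : ι → κ} (hσ : Injective σ) {C : ℝ} (hC : 0 ≤ C) {ψ : lp E p} {φ : lp F p}
    (h : ∀ i, ‖ψ i‖ ≤ C * ‖φ (σ i)‖) : ‖ψ‖ ≤ C * ‖φ‖ := by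
  have hCφ : 0 ≤ C * ‖φ‖ := mul_nonneg hC (lp.norm_nonneg' φ)
  obtain rfl | rfl | hp := p.trichotomy
  · exact absurd rfl hp
  · refine lp.norm_le_of_forall_le hCφ fun i ↦ (h i).trans ?_
    gcongr
    exact lp.norm_apply_le_norm hp φ (σ i)
  · refine lp.norm_le_of_forall_sum_le hp hCφ fun s ↦ ?_
    calc ∑ i ∈ s, ‖ψ i‖ ^ p.toReal
        ≤ ∑ i ∈ s, C ^ p.toReal * ‖φ (σ i)‖ ^ p.toReal := by
          gcongr with i
          rw [← Real.mul_rpow hC (norm_nonneg _)]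
          gcongr
          exact h i
      _ = C ^ p.toReal * ∑ j ∈ s.map ⟨σ, hσ⟩, ‖φ j‖ ^ p.toReal := by
          rw [Finset.sum_map, Finset.mul_sum]; rfl
      _ ≤ C ^ p.toReal * ‖φ‖ ^ p.toReal := by
          gcongr
          exact lp.sum_rpow_le_norm_rpow hp φ _
      _ = (C * ‖φ‖) ^ p.toReal := (Real.mul_rpow hC (lp.norm_nonneg' φ)).symm

variable {ι κ 𝕜 : Type*} [RCLike 𝕜] [DecidableEq ι] [DecidableEq κ]

variable (𝕜) in
/-- The matrix unit with its only nonzero entry, `1`, in position `(i, j)`. -/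
def matrixUnit (i : ι) (j : κ) : lp (fun _ : κ ↦ 𝕜) 2 →L[𝕜] lp (fun _ : ι ↦ 𝕜) 2 :=
  rankOne 𝕜 (lp.single 2 i 1) (lp.single 2 j 1)

theorem matrixUnit_apply (i i' : ι) (j : κ) (φ : lp (fun _ : κ ↦ 𝕜) 2) :
    matrixUnit 𝕜 i j φ i' = if i' = i then φ j else 0 := by
  simp [matrixUnit, lp.inner_single_left, Pi.single_apply]

variable (ι κ 𝕜) in
theorem topologicalClosure_span_matrixUnit_eq_compactOperator :
    (Submodule.span 𝕜 (range fun ij : ι × κ ↦ matrixUnit 𝕜 ij.1 ij.2)).topologicalClosure =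
      compactOperator (RingHom.id 𝕜) (lp (fun _ : κ ↦ 𝕜) 2) (lp (fun _ : ι ↦ 𝕜) 2) := by
  let b : HilbertBasis ι 𝕜 (lp (fun _ : ι ↦ 𝕜) 2) := ⟨.refl 𝕜 _⟩
  let c : HilbertBasis κ 𝕜 (lp (fun _ : κ ↦ 𝕜) 2) := ⟨.refl 𝕜 _⟩
  have hb (i : ι) : b i = lp.single 2 i 1 := (b.repr_symm_single i).symm
  have hc (j : κ) : c j = lp.single 2 j 1 := (c.repr_symm_single j).symm
  simpa only [matrixUnit, hb, hc] using topologicalClosure_span_rankOne_eq_compactOperator b c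

theorem hasSum_smul_matrixUnit {σ : ι → κ} (hσ : Injective σ) {w : ι → 𝕜}
    (hw : Tendsto w cofinite (𝓝 0)) {T : lp (fun _ : κ ↦ 𝕜) 2 →L[𝕜] lp (fun _ : ι ↦ 𝕜) 2}
    (hT : ∀ φ i, T φ i = w i * φ (σ i)) :
    HasSum (fun i ↦ w i • matrixUnit 𝕜 i (σ i)) T := by
  have apply_sum (s : Finset ι) (φ : lp (fun _ : κ ↦ 𝕜) 2) (i : ι) :
      (∑ j ∈ s, w j • matrixUnit 𝕜 j (σ j)) φ i = if i ∈ s then w i * φ (σ i) else 0 := by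
    simp only [sum_apply, lp.coeFn_sum, Finset.sum_apply]
    simp [matrixUnit_apply]
  refine Metric.nhds_basis_closedBall.tendsto_right_iff.2 fun ε hε ↦ ?_
  have small_off_finite : {i | ¬ ‖w i‖ ≤ ε}.Finite := by
    simpa only [mem_closedBall_zero_iff] using
      eventually_cofinite.1 (hw (Metric.closedBall_mem_nhds 0 hε))
  filter_upwards [eventually_ge_atTop small_off_finite.toFinset] with s hs
  rw [mem_closedBall_iff_norm]
  refine ContinuousLinearMap.opNorm_le_bound _ hε.le fun φ ↦
    lp_norm_le_mul_norm_of_injective two_ne_zero hσ hε.le fun i ↦ ?_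
  rw [sub_apply, lp.coeFn_sub, Pi.sub_apply, apply_sum, hT]
  split_ifs with hi
  · rw [sub_self, norm_zero]
    positivity
  · have hwi : ‖w i‖ ≤ ε := by
      by_contra h
      exact hi (hs (small_off_finite.mem_toFinset.2 h))
    rw [zero_sub, norm_neg, norm_mul]
    gcongr

theorem topologicalClosure_span_weightedTranslations_eq_compactOperator {G S : Type*} [AddGroup G]
    [DecidableEq G] {w : G → S → G → 𝕜} (hw_zero : ∀ k g, Tendsto (w k g) cofinite (𝓝 0))
    (hw_single : ∀ k a, ∃ g, w k g = Pi.single a 1) :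
    (Submodule.span 𝕜
      {T : lp (fun _ : G ↦ 𝕜) 2 →L[𝕜] lp (fun _ : G ↦ 𝕜) 2 |
        ∃ k g, ∀ φ a, T φ a = w k g a * φ (a - k)}).topologicalClosure =
      compactOperator (RingHom.id 𝕜) _ _ := by
  refine le_antisymm (Submodule.topologicalClosure_minimal _ (Submodule.span_le.2 ?_)
    isClosed_setOfPred_isCompactOperator) ?_
  · rintro T ⟨k, g, hT⟩
    rw [← topologicalClosure_span_matrixUnit_eq_compactOperator]
    refine (Submodule.isClosed_topologicalClosure _).mem_of_tendsto
      (hasSum_smul_matrixUnit (sub_left_injective (b := k)) (hw_zero k g) hT)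
      (Eventually.of_forall fun s ↦ Submodule.sum_mem _ fun a _ ↦ Submodule.smul_mem _ _ ?_)
    exact Submodule.le_topologicalClosure _ (Submodule.subset_span ⟨(a, a - k), rfl⟩)
  · rw [← topologicalClosure_span_matrixUnit_eq_compactOperator]
    refine Submodule.topologicalClosure_mono (Submodule.span_mono (range_subset_iff.2 ?_))
    rintro ⟨a, b⟩
    obtain ⟨g, hg⟩ := hw_single (-b + a) a
    refine ⟨-b + a, g, fun φ i ↦ ?_⟩
    rw [matrixUnit_apply, hg]
    obtain rfl | h := eq_or_ne i a <;> simp [*]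

end WeightedTranslations

section Sampling

theorem isClosedEmbedding_mul_intCast_add {ι : Type*} {c : ℝ} (hc : c ≠ 0) (v : ι → ℝ) :
    IsClosedEmbedding fun (a : ι → ℤ) i ↦ c * (a i : ℝ) + v i :=
  .piMap fun i ↦ ((Homeomorph.mulLeft₀ c hc).trans
    (Homeomorph.addRight (v i))).isClosedEmbedding.comp Int.isClosedEmbedding_coe_real

variable {ι E : Type*} [TopologicalSpace ι] [DiscreteTopology ι] [NormedAddCommGroup E]
  [NormedSpace ℝ E] {f : ι → E}

theorem tendsto_schwartzMap_comp_cofinite {F : Type*} [NormedAddCommGroup F] [NormedSpace ℝ F]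
    [ProperSpace E] (g : 𝓢(E, F)) (hf : IsClosedEmbedding f) :
    Tendsto (fun i ↦ g (f i)) cofinite (𝓝 0) :=
  cocompact_eq_cofinite ι ▸ g.tendsto_cocompact.comp hf.tendsto_cocompact

theorem exists_schwartzMap_comp_eq_single {F : Type*} [NormedAddCommGroup F] [NormedSpace ℝ F]
    [FiniteDimensional ℝ E] [DecidableEq ι] (hf : IsClosedEmbedding f) (b : ι) (y : F) :
    ∃ g : 𝓢(E, F), (fun i ↦ g (f i)) = Pi.single b y := by
  have hU : (f '' {b}ᶜ)ᶜ ∈ 𝓝 (f b) :=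
    (hf.isClosedMap _ (isClosed_discrete _)).isOpen_compl.mem_nhds (by simp [hf.injective.eq_iff])
  obtain ⟨u, hu_support, hu_compact, hu_smooth, -, hu_one⟩ :=
    exists_contDiff_tsupport_subset (n := ⊤) hU
  have huy_compact : HasCompactSupport fun x ↦ u x • y := hu_compact.smul_right
  refine ⟨huy_compact.toSchwartzMap (hu_smooth.smul contDiff_const), funext fun i ↦ ?_⟩
  change u (f i) • y = _
  obtain rfl | hi := eq_or_ne i b
  · simp [hu_one]
  · have hu_zero : u (f i) = 0 :=
      image_eq_zero_of_notMem_tsupport fun h ↦ hu_support h (mem_image_of_mem f hi)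
    simp [hu_zero, hi]

end Sampling

/-- The operator-norm closure of the span of the T_{k,g,ℏ} (g Schwartz) is exactly the
set of compact operators on ℓ²(ℤⁿ). -/
theorem stmt_7 (n : ℕ) (hn : 1 ≤ n) (ℏ : ℝ) (hℏ : 0 < ℏ) :
    closure (↑(Submodule.span ℂ
      {T : ℓ2 n →L[ℂ] ℓ2 n | ∃ (k : Fin n → ℤ) (g : SchwartzMap (Fin n → ℝ) ℂ),
        ∀ (φ : ℓ2 n) (a : Fin n → ℤ),
          (T φ) a = g (fun i => π * ℏ * (2 * (a i : ℝ) - (k i : ℝ))) * φ (a - k)})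
      : Set (ℓ2 n →L[ℂ] ℓ2 n)) =
    {T : ℓ2 n →L[ℂ] ℓ2 n | IsCompactOperator T} := by
  have lattice (k : Fin n → ℤ) : IsClosedEmbedding fun (a : Fin n → ℤ) (i : Fin n) ↦
      π * ℏ * (2 * (a i : ℝ) - (k i : ℝ)) := by
    have hc : π * ℏ * 2 ≠ 0 := by positivity
    convert isClosedEmbedding_mul_intCast_add hc (fun i ↦ -(π * ℏ * k i)) using 3
    ring
  rw [← Submodule.topologicalClosure_coe]
  have span_closure := topologicalClosure_span_weightedTranslations_eq_compactOperator
    (w := fun k (g : 𝓢(Fin n → ℝ, ℂ)) a ↦ g fun i ↦ π * ℏ * (2 * (a i : ℝ) - (k i : ℝ)))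
    (fun k g ↦ tendsto_schwartzMap_comp_cofinite g (lattice k))
    (fun k a ↦ exists_schwartzMap_comp_eq_single (lattice k) a 1)
  exact congrArg SetLike.coe span_closure
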